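/- Let F be a collection of finite sets, all of the same cardinality α. Then F is a maximal hke collection if and only if |⋃F| = 2α and there exists an equivalence relation on ⋃F with exactly α equivalence classes, each of which has exactly two elements, such that F equals the collection of all subsets B of ⋃F with |B| = α that intersect every equivalence class. -/

import Mathlib

open Finset

/-- The union of a finite collection of finite sets. -/
def famUnion (Γ : Finset (Finset ℕ)) : Finset ℕ := Γ.sup id

/-- The intersection of a finite collection of finite sets
(equal to the usual intersection when the collection is nonempty). -/
def famInter (Γ : Finset (Finset ℕ)) : Finset ℕ :=
  (Γ.sup id).filter (fun x => ∀ A ∈ Γ, x ∈ A)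

/-- `F` is a hereditary König–Egerváry (hke) collection with `α(F) = α`:
`α` is a positive integer and `|⋃Γ| + |⋂Γ| = 2α` for every nonempty subcollection `Γ` of `F`. -/
def IsHKE (F : Finset (Finset ℕ)) (α : ℕ) : Prop :=
  0 < α ∧ ∀ Γ ⊆ F, Γ.Nonempty → (famUnion Γ).card + (famInter Γ).card = 2 * α

/-- `F` is a maximal hke collection: it is an hke collection and no collection
properly containing it is an hke collection. -/
def IsMaxHKE (F : Finset (Finset ℕ)) : Prop :=
  (∃ α, IsHKE F α) ∧ ∀ F' : Finset (Finset ℕ), F ⊂ F' → ¬ ∃ β, IsHKE F' β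

/-!
A transversal of a pairing contains exactly one element of each pair, so `x` lies in every member of
a collection of transversals exactly when its partner lies in none of them; counting pair by pair,
the transversals form an hke collection. If a larger hke collection had a member `B` missing some
pair `{x, y}`, then `B` together with all transversals through `x` would have union missing `y` and
empty intersection.

Conversely, let `F` be an hke collection and enlarge `⋃ F` to a set `U` with `2 * α` elements. The
hke identity says that as many points of `U` lie in all members of `Γ` as lie in none of them, for
every `Γ ⊆ F`. By Möbius inversion on the subcollections of `F`, as many points of `U` have
membership pattern `Γ` as have the complementary pattern, so some permutation of `U` complements
membership patterns. Pairing each point of a fixed `A₀ ∈ F` with its image turns every member of `F`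
into a transversal.
-/

section Fibers

variable {ι κ β : Type*} [Fintype ι] [Fintype κ] [PartialOrder β] [OrderTop β]
  [LocallyFiniteOrder β] [DecidableLE β]

theorem card_filter_le_eq_sum_card_fiber [DecidableEq β] (f : ι → β) (b : β) :
    #{i | b ≤ f i} = ∑ c ∈ Ici b, #{i | f i = c} := by
  have maps_to : Set.MapsTo f ({i | b ≤ f i} : Finset ι) (Ici b) := by
    intro i hi
    simpa using hi
  rw [card_eq_sum_card_fiberwise maps_to]
  refine sum_congr rfl fun c hc => ?_
  congr 1
  ext i
  simp only [mem_filter, mem_univ, true_and, and_iff_right_iff_imp]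
  rintro rfl
  exact mem_Ici.1 hc

theorem card_fiber_eq_sum_mu_mul [DecidableEq β] (f : ι → β) (b : β) :
    (#{i | f i = b} : ℤ) = ∑ c ∈ Ici b, IncidenceAlgebra.mu ℤ b c * #{i | c ≤ f i} :=
  IncidenceAlgebra.moebius_inversion_top (fun c => (#{i | f i = c} : ℤ))
    (fun c => (#{i | c ≤ f i} : ℤ))
    (fun c => by exact_mod_cast card_filter_le_eq_sum_card_fiber f c) b

theorem exists_equiv_of_card_filter_le_eq {f : ι → β} {g : κ → β}
    (h : ∀ b, #{i | b ≤ f i} = #{j | b ≤ g j}) : ∃ e : ι ≃ κ, ∀ i, g (e i) = f i := by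
  let : DecidableEq β := Classical.decEq β
  have card_fiber_eq (b : β) : Fintype.card {i // f i = b} = Fintype.card {j // g j = b} := by
    rw [Fintype.card_subtype, Fintype.card_subtype, ← Nat.cast_inj (R := ℤ),
      card_fiber_eq_sum_mu_mul, card_fiber_eq_sum_mu_mul]
    simp only [h]
  let e := Equiv.ofFiberEquiv fun b => Fintype.equivOfCardEq (card_fiber_eq b)
  exact ⟨e, Equiv.ofFiberEquiv_map _⟩

end Fibers

section Pairing

variable {V : Type*}

/-- The classes of an equivalence relation all of whose classes have two elements; the underlying
set is `P.sup id`. -/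
structure IsPairing (P : Finset (Finset V)) : Prop where
  card_eq_two : ∀ c ∈ P, #c = 2
  pairwiseDisjoint : (P : Set (Finset V)).PairwiseDisjoint id

variable [DecidableEq V] {P : Finset (Finset V)} {B : Finset V} {x y : V}

/-- The sets meeting every class of `P` that have as many elements as `P` has classes; if `P` is a
pairing, they contain exactly one element of each class. -/
def transversals (P : Finset (Finset V)) : Finset (Finset V) :=
  {B ∈ (P.sup id).powerset | #B = #P ∧ ∀ c ∈ P, (B ∩ c).Nonempty}

theorem mem_transversals :
    B ∈ transversals P ↔ B ⊆ P.sup id ∧ #B = #P ∧ ∀ c ∈ P, (B ∩ c).Nonempty := by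
  rw [transversals, mem_filter, mem_powerset]

theorem sum_card_inter_of_pairwiseDisjoint (hP : (P : Set (Finset V)).PairwiseDisjoint id)
    (hB : B ⊆ P.sup id) : ∑ c ∈ P, #(B ∩ c) = #B := by
  have inter_disjoint : (P : Set (Finset V)).PairwiseDisjoint (B ∩ ·) :=
    hP.mono fun _ => inter_subset_right
  rw [← card_biUnion inter_disjoint, ← inter_biUnion]
  rw [sup_eq_biUnion] at hB
  exact congrArg card (inter_eq_left.2 hB)

theorem card_inter_pair (hxy : x ≠ y) :
    #(B ∩ {x, y}) = (if x ∈ B then 1 else 0) + (if y ∈ B then 1 else 0) := by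
  rw [inter_comm, ← filter_mem_eq_inter, card_filter, sum_pair hxy]

theorem pairwiseDisjoint_pair {s : Finset V} {f : V → V} (hf : Set.InjOn f s)
    (hs : ∀ x ∈ s, f x ∉ s) : (s : Set V).PairwiseDisjoint fun x => ({x, f x} : Finset V) := by
  intro x hx y hy hxy
  have image_ne : f x ≠ f y := hf.ne hx hy hxy
  have left_ne : x ≠ f y := fun h => hs y hy (h ▸ hx)
  have right_ne : f x ≠ y := fun h => hs x hx (h ▸ hy)
  simp [Function.onFun, hxy.symm, image_ne.symm, left_ne.symm, right_ne.symm]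

theorem isPairing_image_pair {s : Finset V} {f : V → V} (hf : Set.InjOn f s)
    (hs : ∀ x ∈ s, f x ∉ s) : IsPairing (s.image fun x => {x, f x}) where
  card_eq_two := forall_mem_image.2 fun x hx => card_pair fun h => hs x hx (h ▸ hx)
  pairwiseDisjoint := by
    rw [coe_image]
    exact (pairwiseDisjoint_pair hf hs).image

theorem card_image_pair {s : Finset V} {f : V → V} (hf : Set.InjOn f s)
    (hs : ∀ x ∈ s, f x ∉ s) : #(s.image fun x => ({x, f x} : Finset V)) = #s :=
  card_image_of_injOn fun x hx y hy hxy =>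
    (pairwiseDisjoint_pair hf hs).elim hx hy (by simp [hxy])

theorem card_image_of_forall_mem {f : Finset V → V}
    (hP : (P : Set (Finset V)).PairwiseDisjoint id) (hf : ∀ c ∈ P, f c ∈ c) :
    #(P.image f) = #P :=
  card_image_of_injOn fun c hc d hd hcd =>
    hP.elim_finset hc hd (f c) (hf c hc) (hcd ▸ hf d hd)

theorem image_mem_transversals {f : Finset V → V}
    (hP : (P : Set (Finset V)).PairwiseDisjoint id) (hf : ∀ c ∈ P, f c ∈ c) :
    P.image f ∈ transversals P := by
  refine mem_transversals.2 ⟨image_subset_iff.2 fun c hc => ?_,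
    card_image_of_forall_mem hP hf, fun c hc => ?_⟩
  · exact mem_sup.2 ⟨c, hc, hf c hc⟩
  · exact ⟨f c, mem_inter.2 ⟨mem_image_of_mem f hc, hf c hc⟩⟩

namespace IsPairing

theorem card_sup (hP : IsPairing P) : #(P.sup id) = 2 * #P := by
  rw [sup_eq_biUnion, card_biUnion hP.pairwiseDisjoint, mul_comm]
  exact sum_const_nat hP.card_eq_two

theorem card_inter_eq_one (hP : IsPairing P) (hB : B ∈ transversals P) :
    ∀ c ∈ P, #(B ∩ c) = 1 := by
  obtain ⟨hBP, hcard, hmeets⟩ := mem_transversals.1 hB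
  have one_le : ∀ c ∈ P, 1 ≤ #(B ∩ c) := fun c hc => card_pos.2 (hmeets c hc)
  have sum_eq : ∑ c ∈ P, 1 = ∑ c ∈ P, #(B ∩ c) := by
    rw [sum_card_inter_of_pairwiseDisjoint hP.pairwiseDisjoint hBP, hcard, card_eq_sum_ones]
  exact fun c hc => ((sum_eq_sum_iff_of_le one_le).1 sum_eq c hc).symm

theorem mem_iff_notMem (hP : IsPairing P) (hB : B ∈ transversals P) (hc : {x, y} ∈ P) :
    x ∈ B ↔ y ∉ B := by
  have hxy : x ≠ y := card_pair_eq_two_iff.1 (hP.card_eq_two _ hc)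
  have hone := hP.card_inter_eq_one hB _ hc
  rw [card_inter_pair hxy] at hone
  by_cases hx : x ∈ B <;> by_cases hy : y ∈ B <;> simp_all

theorem exists_mem_transversals_mem_notMem (hP : IsPairing P) (hx : x ∈ P.sup id) (hxy : x ≠ y) :
    ∃ A ∈ transversals P, x ∈ A ∧ y ∉ A := by
  obtain ⟨d, hd, hxd⟩ := mem_sup.1 hx
  have exists_choice (c : Finset V) : ∃ a, c ∈ P → a ∈ c ∧ a ≠ y ∧ (x ∈ c → a = x) := by
    by_cases hxc : x ∈ c
    · exact ⟨x, fun _ => ⟨hxc, hxy, fun _ => rfl⟩⟩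
    by_cases hc : c ∈ P
    · obtain ⟨a, ha, hay⟩ := exists_mem_ne (by rw [hP.card_eq_two c hc]; norm_num) y
      exact ⟨a, fun _ => ⟨ha, hay, fun h => absurd h hxc⟩⟩
    · exact ⟨x, fun h => absurd h hc⟩
  choose f hf using exists_choice
  refine ⟨P.image f, image_mem_transversals hP.pairwiseDisjoint fun c hc => (hf c hc).1,
    mem_image.2 ⟨d, hd, (hf d hd).2.2 hxd⟩, fun hy => ?_⟩
  obtain ⟨c, hc, hcy⟩ := mem_image.1 hy
  exact (hf c hc).2.1 hcy

theorem sup_transversals (hP : IsPairing P) : (transversals P).sup id = P.sup id := by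
  refine le_antisymm (Finset.sup_le fun A hA => (mem_transversals.1 hA).1) fun x hx => ?_
  obtain ⟨c, hc, -⟩ := mem_sup.1 hx
  obtain ⟨y, -, hyx⟩ := exists_mem_ne (by rw [hP.card_eq_two c hc]; norm_num) x
  obtain ⟨A, hA, hxA, -⟩ := hP.exists_mem_transversals_mem_notMem hx hyx.symm
  exact mem_sup.2 ⟨A, hA, hxA⟩

theorem sup_nonempty (hP : IsPairing P) (hne : P.Nonempty) : (P.sup id).Nonempty := by
  rw [← card_pos, hP.card_sup]
  exact Nat.mul_pos two_pos hne.card_pos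

end IsPairing

end Pairing

section HKE

variable {F Γ P : Finset (Finset ℕ)} {A B U : Finset ℕ} {α x : ℕ}

theorem mem_famUnion : x ∈ famUnion Γ ↔ ∃ A ∈ Γ, x ∈ A :=
  mem_sup

theorem mem_famInter (hΓ : Γ.Nonempty) : x ∈ famInter Γ ↔ ∀ A ∈ Γ, x ∈ A := by
  obtain ⟨A, hA⟩ := hΓ
  rw [famInter, mem_filter, and_iff_right_iff_imp]
  exact fun h => mem_sup.2 ⟨A, hA, h A hA⟩

theorem famUnion_singleton : famUnion {A} = A :=
  sup_singleton

theorem famInter_singleton : famInter {A} = A := by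
  ext x
  simp [mem_famInter]

theorem famInter_subset_famUnion : famInter Γ ⊆ famUnion Γ :=
  filter_subset _ _

theorem subset_famUnion (hA : A ∈ Γ) : A ⊆ famUnion Γ :=
  le_sup (f := id) hA

theorem famUnion_mono (h : Γ ⊆ F) : famUnion Γ ⊆ famUnion F :=
  sup_mono h

namespace IsHKE

theorem card_eq (hF : IsHKE F α) (hA : A ∈ F) : #A = α := by
  have hsingleton := hF.2 {A} (singleton_subset_iff.2 hA) (singleton_nonempty A)
  rw [famUnion_singleton, famInter_singleton] at hsingleton
  lia

theorem card_famUnion_le (hF : IsHKE F α) (hne : F.Nonempty) : #(famUnion F) ≤ 2 * α :=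
  (Nat.le_add_right _ _).trans (hF.2 F subset_rfl hne).le

theorem card_famInter_eq_card_sdiff (hF : IsHKE F α) (hU : famUnion F ⊆ U) (hcard : #U = 2 * α)
    (hΓ : Γ ⊆ F) (hne : Γ.Nonempty) : #(famInter Γ) = #(U \ famUnion Γ) := by
  have hsum := hF.2 Γ hΓ hne
  rw [card_sdiff_of_subset ((famUnion_mono hΓ).trans hU)]
  lia

theorem card_filter_forall_mem_eq (hF : IsHKE F α) (hU : famUnion F ⊆ U) (hcard : #U = 2 * α)
    (hΓ : Γ ⊆ F) : #{x ∈ U | ∀ A ∈ Γ, x ∈ A} = #{x ∈ U | ∀ A ∈ Γ, x ∉ A} := by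
  obtain rfl | hne := Γ.eq_empty_or_nonempty
  · simp
  have inter_eq : {x ∈ U | ∀ A ∈ Γ, x ∈ A} = famInter Γ := by
    have inter_subset : famInter Γ ⊆ U :=
      famInter_subset_famUnion.trans ((famUnion_mono hΓ).trans hU)
    ext x
    rw [mem_filter, ← mem_famInter hne, and_iff_right_iff_imp]
    exact @inter_subset x
  have sdiff_eq : {x ∈ U | ∀ A ∈ Γ, x ∉ A} = U \ famUnion Γ := by
    ext x
    simp [mem_famUnion]
  rw [inter_eq, sdiff_eq, hF.card_famInter_eq_card_sdiff hU hcard hΓ hne]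

theorem exists_perm_complementing (hF : IsHKE F α) (hU : famUnion F ⊆ U) (hcard : #U = 2 * α) :
    ∃ σ : Equiv.Perm ℕ, ∀ x ∈ U, σ x ∈ U ∧ ∀ A ∈ F, σ x ∈ A ↔ x ∉ A := by
  let containing (x : U) : Finset F := {A | x.1 ∈ A.1}
  let avoiding (x : U) : Finset F := {A | x.1 ∉ A.1}
  have card_pattern_eq (Γ : Finset F) : #{x | Γ ≤ containing x} = #{x | Γ ≤ avoiding x} := by
    have hΓ : Γ.map (Function.Embedding.subtype _) ⊆ F := fun _ =>
      property_of_mem_map_subtype Γ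
    have hcount := hF.card_filter_forall_mem_eq hU hcard hΓ
    simp only [card_filter, ← sum_coe_sort U] at hcount ⊢
    simpa [subset_iff, containing, avoiding] using hcount
  obtain ⟨e, he⟩ := exists_equiv_of_card_filter_le_eq card_pattern_eq
  refine ⟨Equiv.Perm.ofSubtype e, fun x hx => ?_⟩
  rw [Equiv.Perm.ofSubtype_apply_of_mem e hx]
  refine ⟨(e ⟨x, hx⟩).2, fun A hA => ?_⟩
  have hpattern := Finset.ext_iff.1 (he ⟨x, hx⟩) ⟨A, hA⟩
  simp only [containing, avoiding, mem_filter, mem_univ, true_and] at hpattern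
  rw [← hpattern, not_not]

theorem exists_isPairing_subset_transversals (hF : IsHKE F α) (hne : F.Nonempty) :
    ∃ P, IsPairing P ∧ #P = α ∧ F ⊆ transversals P := by
  obtain ⟨A₀, hA₀⟩ := hne
  obtain ⟨U, hU, hcard⟩ :=
    Infinite.exists_superset_card_eq (famUnion F) _ (hF.card_famUnion_le ⟨A₀, hA₀⟩)
  obtain ⟨σ, hσ⟩ := hF.exists_perm_complementing hU hcard
  have subset_U {A : Finset ℕ} (hA : A ∈ F) : A ⊆ U := (subset_famUnion hA).trans hU
  have image_notMem : ∀ x ∈ A₀, σ x ∉ A₀ := fun x hx h =>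
    ((hσ x (subset_U hA₀ hx)).2 A₀ hA₀).1 h hx
  let P : Finset (Finset ℕ) := A₀.image fun x => {x, σ x}
  have hP : IsPairing P := isPairing_image_pair σ.injective.injOn image_notMem
  have hPcard : #P = α :=
    (card_image_pair σ.injective.injOn image_notMem).trans (hF.card_eq hA₀)
  have hPU : P.sup id = U := by
    refine eq_of_subset_of_card_le (Finset.sup_le ?_) (by rw [hP.card_sup, hPcard, hcard])
    refine forall_mem_image.2 fun x hx => ?_
    have hxU := subset_U hA₀ hx
    simp [insert_subset_iff, hxU, (hσ x hxU).1]
  refine ⟨P, hP, hPcard, fun A hA => mem_transversals.2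
    ⟨hPU ▸ subset_U hA, (hF.card_eq hA).trans hPcard.symm, forall_mem_image.2 fun x hx => ?_⟩⟩
  by_cases hxA : x ∈ A
  · exact ⟨x, by simp [hxA]⟩
  · exact ⟨σ x, by simp [((hσ x (subset_U hA₀ hx)).2 A hA).2 hxA]⟩

end IsHKE

namespace IsPairing

theorem card_famUnion_inter_add_card_famInter_inter (hP : IsPairing P)
    (hΓ : Γ ⊆ transversals P) (hne : Γ.Nonempty) {c : Finset ℕ} (hc : c ∈ P) :
    #(famUnion Γ ∩ c) + #(famInter Γ ∩ c) = 2 := by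
  obtain ⟨x, y, hxy, rfl⟩ := Finset.card_eq_two.1 (hP.card_eq_two c hc)
  have mem_inter_iff {x y : ℕ} (hc : {x, y} ∈ P) : x ∈ famInter Γ ↔ y ∉ famUnion Γ := by
    rw [mem_famInter hne, mem_famUnion]
    push Not
    exact forall₂_congr fun A hA => hP.mem_iff_notMem (hΓ hA) hc
  rw [card_inter_pair hxy, card_inter_pair hxy]
  simp only [mem_inter_iff hc, mem_inter_iff (pair_comm x y ▸ hc)]
  split_ifs <;> rfl

theorem isHKE_transversals (hP : IsPairing P) (hne : P.Nonempty) :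
    IsHKE (transversals P) #P := by
  refine ⟨hne.card_pos, fun Γ hΓ hΓne => ?_⟩
  have hunion : famUnion Γ ⊆ P.sup id := Finset.sup_le fun A hA => (mem_transversals.1 (hΓ hA)).1
  have hinter : famInter Γ ⊆ P.sup id := famInter_subset_famUnion.trans hunion
  calc #(famUnion Γ) + #(famInter Γ)
      = ∑ c ∈ P, (#(famUnion Γ ∩ c) + #(famInter Γ ∩ c)) := by
        rw [sum_add_distrib, sum_card_inter_of_pairwiseDisjoint hP.pairwiseDisjoint hunion,
          sum_card_inter_of_pairwiseDisjoint hP.pairwiseDisjoint hinter]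
    _ = #P * 2 := sum_const_nat fun c hc =>
        hP.card_famUnion_inter_add_card_famInter_inter hΓ hΓne hc
    _ = 2 * #P := mul_comm _ _

theorem famUnion_eq_of_transversals_subset (hP : IsPairing P) (hF : IsHKE F #P) (hne : F.Nonempty)
    (hsub : transversals P ⊆ F) : famUnion F = P.sup id := by
  refine (eq_of_subset_of_card_le ?_ ?_).symm
  · rw [← hP.sup_transversals]
    exact famUnion_mono hsub
  · rw [hP.card_sup]
    exact hF.card_famUnion_le hne

theorem notMem_famUnion_insert_filter_mem (hP : IsPairing P) {y : ℕ} (hc : {x, y} ∈ P)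
    (hyB : y ∉ B) : y ∉ famUnion (insert B {A ∈ transversals P | x ∈ A}) := by
  simp only [mem_famUnion, exists_mem_insert, mem_filter]
  rintro (hy | ⟨A, ⟨hA, hxA⟩, hyA⟩)
  · exact hyB hy
  · exact (hP.mem_iff_notMem hA hc).1 hxA hyA

theorem famInter_insert_filter_mem_eq_empty (hP : IsPairing P) (hx : x ∈ P.sup id) (hxB : x ∉ B) :
    famInter (insert B {A ∈ transversals P | x ∈ A}) = ∅ := by
  refine eq_empty_of_forall_notMem fun z hz => ?_
  rw [mem_famInter (insert_nonempty _ _), forall_mem_insert] at hz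
  have hxz : x ≠ z := fun h => hxB (h ▸ hz.1)
  obtain ⟨A, hA, hxA, hzA⟩ := hP.exists_mem_transversals_mem_notMem hx hxz
  exact hzA (hz.2 A (mem_filter.2 ⟨hA, hxA⟩))

theorem inter_nonempty_of_transversals_subset (hP : IsPairing P) (hF : IsHKE F #P)
    (hsub : transversals P ⊆ F) (hB : B ∈ F) {c : Finset ℕ} (hc : c ∈ P) : (B ∩ c).Nonempty := by
  by_contra hmiss
  rw [not_nonempty_iff_eq_empty, ← disjoint_iff_inter_eq_empty] at hmiss
  obtain ⟨x, y, -, rfl⟩ := Finset.card_eq_two.1 (hP.card_eq_two c hc)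
  have hx : x ∈ P.sup id := mem_sup.2 ⟨_, hc, by simp⟩
  have hy : y ∈ P.sup id := mem_sup.2 ⟨_, hc, by simp⟩
  have hxB : x ∉ B := disjoint_right.1 hmiss (by simp)
  have hyB : y ∉ B := disjoint_right.1 hmiss (by simp)
  let Γ : Finset (Finset ℕ) := insert B {A ∈ transversals P | x ∈ A}
  have hΓ : Γ ⊆ F := insert_subset hB ((filter_subset _ _).trans hsub)
  have union_subset : famUnion Γ ⊆ (P.sup id).erase y := by
    rw [← hP.famUnion_eq_of_transversals_subset hF ⟨B, hB⟩ hsub]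
    exact subset_erase.2 ⟨famUnion_mono hΓ, hP.notMem_famUnion_insert_filter_mem hc hyB⟩
  refine (hF.2 Γ hΓ (insert_nonempty _ _)).not_lt ?_
  calc #(famUnion Γ) + #(famInter Γ) = #(famUnion Γ) := by
        rw [hP.famInter_insert_filter_mem_eq_empty hx hxB, card_empty, add_zero]
    _ ≤ #((P.sup id).erase y) := card_le_card union_subset
    _ < #(P.sup id) := card_erase_lt_of_mem hy
    _ = 2 * #P := hP.card_sup

theorem subset_transversals_of_transversals_subset (hP : IsPairing P) (hF : IsHKE F #P)
    (hsub : transversals P ⊆ F) : F ⊆ transversals P := fun B hB =>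
  mem_transversals.2 ⟨hP.famUnion_eq_of_transversals_subset hF ⟨B, hB⟩ hsub ▸ subset_famUnion hB,
    hF.card_eq hB, fun _ hc => hP.inter_nonempty_of_transversals_subset hF hsub hB hc⟩

theorem isMaxHKE_transversals (hP : IsPairing P) (hne : P.Nonempty) :
    IsMaxHKE (transversals P) := by
  refine ⟨⟨#P, hP.isHKE_transversals hne⟩, fun F hlt ⟨β, hF⟩ => ?_⟩
  obtain ⟨x, hx⟩ := hP.sup_nonempty hne
  obtain ⟨A, hA, -⟩ := mem_sup.1 (hP.sup_transversals ▸ hx)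
  have hβ : β = #P := (hF.card_eq (hlt.1 hA)).symm.trans (mem_transversals.1 hA).2.1
  subst hβ
  exact hlt.2 (hP.subset_transversals_of_transversals_subset hF hlt.1)

end IsPairing

theorem isHKE_singleton (hA : A.Nonempty) : IsHKE {A} #A := by
  refine ⟨hA.card_pos, fun Γ hΓ hne => ?_⟩
  obtain rfl := (subset_singleton_iff.1 hΓ).resolve_left hne.ne_empty
  rw [famUnion_singleton, famInter_singleton, two_mul]

theorem IsMaxHKE.nonempty (hF : IsMaxHKE F) : F.Nonempty := by
  by_contra hempty
  rw [not_nonempty_iff_eq_empty] at hempty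
  subst hempty
  exact hF.2 {{0}} (by simp) ⟨_, isHKE_singleton (singleton_nonempty 0)⟩

theorem IsMaxHKE.exists_isPairing_eq_transversals (hF : IsMaxHKE F) :
    ∃ P, IsPairing P ∧ F = transversals P := by
  obtain ⟨⟨α, hα⟩, hmax⟩ := hF
  obtain ⟨P, hP, rfl, hsub⟩ :=
    hα.exists_isPairing_subset_transversals (IsMaxHKE.nonempty ⟨⟨α, hα⟩, hmax⟩)
  refine ⟨P, hP, hsub.antisymm ?_⟩
  by_contra hnot
  exact hmax _ ⟨hsub, hnot⟩ ⟨_, hP.isHKE_transversals (card_pos.1 hα.1)⟩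

end HKE

/-- a collection `F` of finite sets, all of cardinality `α`, is a maximal hke
collection iff `|⋃F| = 2α` and there is an equivalence relation on `⋃F` (given by its
partition `P` into equivalence classes) with exactly `α` classes, each of exactly two
elements, such that `F` is exactly the collection of subsets `B` of `⋃F` with `|B| = α`
intersecting every class. -/
theorem isMaxHKE_iff_exists_pairing (F : Finset (Finset ℕ)) (α : ℕ) (hα : 0 < α)
    (hcard : ∀ A ∈ F, A.card = α) :
    IsMaxHKE F ↔
      ((famUnion F).card = 2 * α ∧
        ∃ P : Finset (Finset ℕ),
          P.card = α ∧
          (∀ c ∈ P, c.card = 2) ∧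
          (∀ c ∈ P, ∀ c' ∈ P, c ≠ c' → Disjoint c c') ∧
          famUnion P = famUnion F ∧
          F = (famUnion F).powerset.filter
            (fun B => B.card = α ∧ ∀ c ∈ P, (B ∩ c).Nonempty)) := by
  constructor
  · intro hF
    obtain ⟨A, hA⟩ := hF.nonempty
    obtain ⟨P, hP, rfl⟩ := hF.exists_isPairing_eq_transversals
    have hPα : #P = α := (mem_transversals.1 hA).2.1.symm.trans (hcard A hA)
    have hunion : famUnion (transversals P) = famUnion P := hP.sup_transversals
    subst hPα
    rw [hunion]
    exact ⟨hP.card_sup, P, rfl, hP.card_eq_two, hP.pairwiseDisjoint, rfl, rfl⟩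
  · rintro ⟨-, P, rfl, hpair, hdisj, hunion, hF⟩
    rw [← hunion] at hF
    subst hF
    have hP : IsPairing P := ⟨hpair, hdisj⟩
    exact hP.isMaxHKE_transversals (card_pos.1 hα)
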